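/- arXiv:1907.07600 — 4 statements merged into one kernel-verified Lean document; each statement's English description precedes it below -/
import Mathlib

section
/- Let (V, ‖·‖) be a normed vector space, let γ ≥ 0, c ≥ 0, and let a ∈ (0,1) with γ < a. Let {z[k]}_{k≥0} and {e[k]}_{k≥0} be sequences in V such that ‖z[k+1]‖ ≤ γ·‖z[k]‖ + c·‖e[k]‖ for all k ≥ 0. Then for every K ≥ 0: max_{0≤k≤K} a^{−k}‖z[k]‖ ≤ (c/(a − γ))·max_{0≤k≤K} a^{−k}‖e[k]‖ + (a/(a − γ))·‖z[0]‖. -/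
/-!
The weighted sequence `w k = u k / a ^ k` satisfies `w (k + 1) ≤ (γ / a) * w k + (c / a) * E`,
where `E` bounds the weighted forcing. The affine map `t ↦ (γ / a) * t + (c / a) * E` is monotone
and sends `B = c / (a - γ) * E + a / (a - γ) * u 0` to `B - u 0 ≤ B`. As `w 0 = u 0 ≤ B`, the
sequence `w` never exceeds `B`.
-/

section FiniteGain

variable {𝕜 : Type*} [Field 𝕜]

/-- The finite-gain bound: gain `c / (a - γ)` on a forcing of weighted size `E`, plus the
contribution of the initial value `x`. It is meant for `γ < a`; at `γ = a` it has the junk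
value `0`. -/
def finiteGainBound (γ c a E x : 𝕜) : 𝕜 :=
  c / (a - γ) * E + a / (a - γ) * x

variable [LinearOrder 𝕜] [IsStrictOrderedRing 𝕜] {γ c a E : 𝕜}

theorem le_finiteGainBound {x : 𝕜} (hγ : 0 ≤ γ) (hc : 0 ≤ c) (hγa : γ < a) (hE : 0 ≤ E)
    (hx : 0 ≤ x) : x ≤ finiteGainBound γ c a E x := by
  have hgap : 0 < a - γ := sub_pos.mpr hγa
  have hgain : 0 ≤ c / (a - γ) * E := by positivity
  have hfactor : 1 ≤ a / (a - γ) := (one_le_div hgap).mpr (sub_le_self a hγ)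
  exact (le_mul_of_one_le_left hx hfactor).trans (le_add_of_nonneg_left hgain)

theorem div_mul_finiteGainBound_add (ha : 0 < a) (hγa : γ < a) (x : 𝕜) :
    γ / a * finiteGainBound γ c a E x + c / a * E = finiteGainBound γ c a E x - x := by
  have hgap : a - γ ≠ 0 := (sub_pos.mpr hγa).ne'
  unfold finiteGainBound
  field_simp
  ring

theorem div_pow_succ_le_of_le_mul_add {x x' y : 𝕜} (ha : 0 < a) (h : x' ≤ γ * x + c * y) (k : ℕ) :
    x' / a ^ (k + 1) ≤ γ / a * (x / a ^ k) + c / a * (y / a ^ k) :=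
  calc
    x' / a ^ (k + 1) ≤ (γ * x + c * y) / a ^ (k + 1) := by gcongr
    _ = γ / a * (x / a ^ k) + c / a * (y / a ^ k) := by
      rw [pow_succ']
      field_simp

variable {u v : ℕ → 𝕜}

theorem div_pow_le_finiteGainBound (hγ : 0 ≤ γ) (hc : 0 ≤ c) (ha : 0 < a) (hγa : γ < a)
    (hE : 0 ≤ E) (hu : 0 ≤ u 0) {n : ℕ} (hrec : ∀ k < n, u (k + 1) ≤ γ * u k + c * v k)
    (hv : ∀ k < n, v k / a ^ k ≤ E) :
    u n / a ^ n ≤ finiteGainBound γ c a E (u 0) := by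
  have hmono : Monotone fun t : 𝕜 => γ / a * t + c / a * E := fun s t hst => by
    dsimp only
    gcongr
  refine hmono.seq_le_seq (x := fun k => u k / a ^ k)
    (y := fun _ => finiteGainBound γ c a E (u 0)) n ?initial ?step ?invariant
  case initial => simpa only [pow_zero, div_one] using le_finiteGainBound hγ hc hγa hE hu
  case step =>
    intro k hk
    calc
      u (k + 1) / a ^ (k + 1) ≤ γ / a * (u k / a ^ k) + c / a * (v k / a ^ k) :=
        div_pow_succ_le_of_le_mul_add ha (hrec k hk) k
      _ ≤ γ / a * (u k / a ^ k) + c / a * E := by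
        gcongr
        exact hv k hk
  case invariant =>
    intro _ _
    exact (div_mul_finiteGainBound_add ha hγa (u 0)).trans_le (sub_le_self _ hu)

theorem stmt1_general (hγ : 0 ≤ γ) (hc : 0 ≤ c) (ha : 0 < a) (hγa : γ < a) (hu : 0 ≤ u 0)
    (hv : 0 ≤ v 0) (K : ℕ) (hrec : ∀ k < K, u (k + 1) ≤ γ * u k + c * v k) :
    (Finset.range (K + 1)).sup' Finset.nonempty_range_add_one (fun k => u k / a ^ k) ≤
      c / (a - γ) *
          (Finset.range (K + 1)).sup' Finset.nonempty_range_add_one (fun k => v k / a ^ k) +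
        a / (a - γ) * u 0 := by
  set E := (Finset.range (K + 1)).sup' Finset.nonempty_range_add_one (fun k => v k / a ^ k)
  have hvE : ∀ k < K + 1, v k / a ^ k ≤ E := fun k hk =>
    Finset.le_sup' (fun k => v k / a ^ k) (Finset.mem_range.mpr hk)
  have hE : 0 ≤ E := (div_nonneg hv (pow_nonneg ha.le 0)).trans (hvE 0 K.succ_pos)
  refine Finset.sup'_le _ _ fun n hn => ?_
  have hnK : n < K + 1 := Finset.mem_range.mp hn
  exact div_pow_le_finiteGainBound hγ hc ha hγa hE hu (fun k hk => hrec k (by lia))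
    (fun k hk => hvE k (hk.trans hnK))

end FiniteGain

theorem stmt1 {V : Type*} [NormedAddCommGroup V] [NormedSpace ℝ V]
    (γ c a : ℝ) (hγ : 0 ≤ γ) (hc : 0 ≤ c) (ha : a ∈ Set.Ioo (0 : ℝ) 1) (hγa : γ < a)
    (z e : ℕ → V) (hrec : ∀ k : ℕ, ‖z (k + 1)‖ ≤ γ * ‖z k‖ + c * ‖e k‖) :
    ∀ K : ℕ,
      (Finset.range (K + 1)).sup' (Finset.nonempty_range_iff.mpr (Nat.succ_ne_zero K))
          (fun k => ‖z k‖ / a ^ k) ≤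
        (c / (a - γ)) *
            (Finset.range (K + 1)).sup' (Finset.nonempty_range_iff.mpr (Nat.succ_ne_zero K))
              (fun k => ‖e k‖ / a ^ k) +
          (a / (a - γ)) * ‖z 0‖ :=
  fun K => stmt1_general (u := fun k => ‖z k‖) (v := fun k => ‖e k‖) hγ hc ha.1 hγa
    (norm_nonneg _) (norm_nonneg _) K fun k _ => hrec k
end

section
/- Let n ≥ 1, let m > 0, let H ∈ ℝ^{n×n} be a real symmetric matrix with vᴴHv ≥ m‖v‖₂² for every v ∈ ℂⁿ (i.e., H ⪰ mI), and let c ∈ (0,1]. Define the (n+1)×(n+1) real matrix B := [[H, −c·𝟙], [𝟙ᵀ, 0]], where 𝟙 ∈ ℝⁿ is the all-ones column vector. Then every eigenvalue μ ∈ ℂ of B satisfies Re(μ) > 0. -/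
open Matrix

/-!
If `(x, y)` is an eigenvector of `[[A, -c Bᴴ], [B, 0]]` for `μ`, then `A x - c Bᴴ y = μ x` and
`B x = μ y`. Pairing the first equation with `x` and substituting the second into
`xᴴ Bᴴ y = (B x)ᴴ y` gives `xᴴ A x = μ ‖x‖² + c μ̄ ‖y‖²`. Since `μ` and `μ̄` have the same real
part, `Re (xᴴ A x) = Re μ (‖x‖² + c ‖y‖²)`. The left side is positive unless `x = 0`, and `x = 0`
would force `Bᴴ y = 0`, hence `y = 0`.
-/

theorem sum_normSq_pos {ι : Type*} [Fintype ι] {x : ι → ℂ} (hx : x ≠ 0) :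
    0 < ∑ i, Complex.normSq (x i) := by
  obtain ⟨i, hi⟩ := Function.ne_iff.1 hx
  exact Finset.sum_pos' (fun _ _ => Complex.normSq_nonneg _)
    ⟨i, Finset.mem_univ i, Complex.normSq_pos.2 hi⟩

theorem linearIndependent_row_const_one {R ι κ : Type*} [Ring R] [IsDomain R] [Nonempty ι]
    [Unique κ] : LinearIndependent R (of fun (_ : κ) (_ : ι) => (1 : R)).row :=
  .of_subsingleton default one_ne_zero

theorem conjTranspose_mulVec_eq_zero_iff {R ι κ : Type*} [Ring R] [StarRing R] [Fintype κ]
    {B : Matrix κ ι R} (hB : LinearIndependent R B.row) {y : κ → R} :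
    Bᴴ *ᵥ y = 0 ↔ y = 0 := by
  rw [← star_eq_zero, star_mulVec, conjTranspose_conjTranspose,
    ← star_eq_zero (x := y), ← (vecMul_injective_iff.2 hB).eq_iff, zero_vecMul]

section SaddlePoint

variable {𝕜 ι κ : Type*} [RCLike 𝕜] [Fintype ι] [Fintype κ]
  {A : Matrix ι ι 𝕜} {B : Matrix κ ι 𝕜} {c : ℝ} {μ : 𝕜} {x : ι → 𝕜} {y : κ → 𝕜}

open scoped ComplexOrder in
theorem re_star_dotProduct_self_nonneg (x : ι → 𝕜) : 0 ≤ RCLike.re (star x ⬝ᵥ x) :=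
  (RCLike.nonneg_iff.1 (dotProduct_star_self_nonneg x)).1

open scoped ComplexOrder in
theorem im_star_dotProduct_self (x : ι → 𝕜) : RCLike.im (star x ⬝ᵥ x) = 0 :=
  (RCLike.nonneg_iff.1 (dotProduct_star_self_nonneg x)).2

theorem fromBlocks_neg_smul_conjTranspose_mulVec_elim_eq_smul_iff :
    fromBlocks A (-c • Bᴴ) B 0 *ᵥ Sum.elim x y = μ • Sum.elim x y ↔
      A *ᵥ x = μ • x + c • Bᴴ *ᵥ y ∧ B *ᵥ x = μ • y := by
  have smul_elim : μ • Sum.elim x y = Sum.elim (μ • x) (μ • y) := by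
    ext (i | j) <;> rfl
  rw [fromBlocks_mulVec, smul_elim, Sum.elim_eq_iff]
  simp only [Sum.elim_comp_inl, Sum.elim_comp_inr, zero_mulVec, add_zero, smul_mulVec, neg_smul,
    neg_mulVec, ← sub_eq_add_neg, sub_eq_iff_eq_add]

theorem star_dotProduct_mulVec_eq_of_saddlePoint
    (hx : A *ᵥ x = μ • x + c • Bᴴ *ᵥ y) (hy : B *ᵥ x = μ • y) :
    star x ⬝ᵥ A *ᵥ x = μ * (star x ⬝ᵥ x) + c • (star μ * (star y ⬝ᵥ y)) := by
  have adjoint : star x ⬝ᵥ Bᴴ *ᵥ y = star μ * (star y ⬝ᵥ y) := by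
    rw [dotProduct_mulVec, ← star_mulVec, hy, star_smul, smul_dotProduct, smul_eq_mul]
  rw [hx, dotProduct_add, dotProduct_smul, dotProduct_smul, adjoint, smul_eq_mul]

theorem re_star_dotProduct_mulVec_eq_of_saddlePoint
    (hx : A *ᵥ x = μ • x + c • Bᴴ *ᵥ y) (hy : B *ᵥ x = μ • y) :
    RCLike.re (star x ⬝ᵥ A *ᵥ x) =
      RCLike.re μ * (RCLike.re (star x ⬝ᵥ x) + c * RCLike.re (star y ⬝ᵥ y)) := by
  rw [star_dotProduct_mulVec_eq_of_saddlePoint hx hy, map_add, RCLike.smul_re, RCLike.mul_re,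
    RCLike.mul_re, im_star_dotProduct_self, im_star_dotProduct_self, RCLike.star_def,
    RCLike.conj_re]
  ring

theorem stmt2_general (hA : ∀ x : ι → 𝕜, x ≠ 0 → 0 < RCLike.re (star x ⬝ᵥ A *ᵥ x))
    (hB : LinearIndependent 𝕜 B.row) (hc : 0 < c) {v : ι ⊕ κ → 𝕜} (hv : v ≠ 0)
    (heig : fromBlocks A (-c • Bᴴ) B 0 *ᵥ v = μ • v) : 0 < RCLike.re μ := by
  obtain ⟨x, y, rfl⟩ : ∃ x y, v = Sum.elim x y := ⟨_, _, (Sum.elim_comp_inl_inr v).symm⟩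
  obtain ⟨hx, hy⟩ := fromBlocks_neg_smul_conjTranspose_mulVec_elim_eq_smul_iff.1 heig
  have x_ne_zero : x ≠ 0 := by
    rintro rfl
    have : y = 0 := by
      simpa [hc.ne', conjTranspose_mulVec_eq_zero_iff hB] using hx.symm
    exact hv (by rw [this, Sum.elim_zero_zero])
  have energy_pos := hA x x_ne_zero
  rw [re_star_dotProduct_mulVec_eq_of_saddlePoint hx hy] at energy_pos
  exact pos_of_mul_pos_left energy_pos (add_nonneg (re_star_dotProduct_self_nonneg x)
    (mul_nonneg hc.le (re_star_dotProduct_self_nonneg y)))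

end SaddlePoint

theorem map_ofReal_fromBlocks_const {ι κ : Type*} (H : Matrix ι ι ℝ) (c : ℝ) :
    (fromBlocks H (of fun _ (_ : κ) => -c) (of fun (_ : κ) _ => 1) 0).map Complex.ofReal =
      fromBlocks (H.map Complex.ofReal) (-c • (of fun (_ : κ) _ => 1)ᴴ) (of fun _ _ => 1) 0 := by
  ext (i | i) (j | j) <;> simp

theorem stmt2 {n : ℕ} (hn : 1 ≤ n) (m : ℝ) (hm : 0 < m)
    (H : Matrix (Fin n) (Fin n) ℝ) (hsymm : H.IsSymm)
    (hpos : ∀ v : Fin n → ℂ,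
      m * ∑ i, Complex.normSq (v i) ≤ (star v ⬝ᵥ (H.map Complex.ofReal) *ᵥ v).re)
    (c : ℝ) (hc : c ∈ Set.Ioc (0 : ℝ) 1)
    (B : Matrix (Fin n ⊕ Fin 1) (Fin n ⊕ Fin 1) ℝ)
    (hB : B = Matrix.fromBlocks H (Matrix.of fun _ _ => -c) (Matrix.of fun _ _ => (1 : ℝ)) 0)
    (μ : ℂ) (v : Fin n ⊕ Fin 1 → ℂ) (hv : v ≠ 0)
    (heig : (B.map Complex.ofReal) *ᵥ v = μ • v) :
    0 < μ.re := by
  rw [hB, map_ofReal_fromBlocks_const] at heig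
  have : Nonempty (Fin n) := ⟨⟨0, hn⟩⟩
  exact stmt2_general (fun x hx => (mul_pos hm (sum_normSq_pos hx)).trans_le (hpos x))
    linearIndependent_row_const_one hc.1 hv heig
end

section
/- (Proposition 2) Let each f_i : ℝ → ℝ (i = 1,…,n) be twice continuously differentiable with f_i''(x) ≥ m > 0 for all x ∈ [p̲_i, p̄_i], and let {W[k]}_{k≥0} be symmetric doubly stochastic n×n matrices with W_{ij}[k] ≥ η > 0 whenever {i,j} is an edge active at time k, W_{ii}[k] ≥ η, and W_{ij}[k] = 0 otherwise, such that there exists a positive integer B for which the union of the active edge sets over each window {kB, …, (k+1)B − 1} forms a connected graph on {1,…,n}. Consider the distributed primal-dual iterates: p_i[k+1] = Proj_{[p̲_i,p̄_i]}(p_i[k] − s f_i'(p_i[k]) + sξλ_i[k]), λ[k+1] = W[k]λ[k] − s·y[k], y[k+1] = W[k]y[k] + n̂(p[k+1] − p[k]), with y[0] = n̂(p[0] − ℓ), and set λ̂[k] := (1/n̂)𝟙ᵀλ[k], e[k] := λ[k] − (n̂/n)λ̂[k]𝟙, z[k] := (p[k] − p*, λ̂[k] − λ*), where (p*, λ*)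 is the equilibrium of the nominal system. Then there exist a ∈ (0,1), s̄ > 0, α2 > 0 and β2 ≥ 0 (β2 depending on initial conditions) such that for every s ∈ (0, s̄) and every K ≥ 0: ‖e‖₂^{a,K} ≤ s·α2·‖z‖₂^{a,K} + β2. -/
open Matrix

/-- Projection of `x` onto the interval `[lo, hi]`. -/
noncomputable def projI (lo hi x : ℝ) : ℝ := max lo (min hi x)

/-- Euclidean norm of a vector in ℝ^d. -/
noncomputable def eunorm {d : ℕ} (x : Fin d → ℝ) : ℝ := Real.sqrt (∑ i, (x i) ^ 2)

/-- The weighted norm ‖x‖₂^{a,K} = max_{0 ≤ k ≤ K} a^{-k} ‖x[k]‖₂. -/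
noncomputable def wnormSeq {d : ℕ} (a : ℝ) (x : ℕ → Fin d → ℝ) (K : ℕ) : ℝ :=
  (Finset.range (K + 1)).sup' (Finset.nonempty_range_iff.mpr (Nat.succ_ne_zero K))
    fun k => eunorm (x k) / a ^ k

/-! The disagreement of `λ` and the disagreement of `y` both follow the averaging recursion
`x[k+1] = W[k] x[k] + u[k]` with zero-sum state. One averaging step with a doubly stochastic
matrix lowers `∑ xᵢ²` by `∑ Wᵢⱼ (xⱼ - (W x)ᵢ)²`, so if little is lost over a window, then no
coordinate has moved far and linked coordinates are close to each other; on a connected window graph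
a zero-sum vector must then be small. Hence every window contracts the unforced recursion by a
fixed `q < 1`, and for `q < a ^ L` the recursion has finite gain in the norm weighted by `a`.
Composing the gain from `p[k+1] - p[k]` to `y` with the one from `-s y` to `λ` gives the result,
the factor `s` coming from the second input. -/

open Fintype (balance)
open scoped BigOperators

section WeightedNorm

variable {d : ℕ} {a : ℝ} {x : ℕ → Fin d → ℝ} {K : ℕ}

theorem eunorm_eq_norm_toLp (v : Fin d → ℝ) : eunorm v = ‖WithLp.toLp 2 v‖ := by
  simp [eunorm, EuclideanSpace.norm_eq]

theorem eunorm_le_eunorm_snoc (v : Fin d → ℝ) (c : ℝ) :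
    eunorm v ≤ eunorm (Fin.snoc v c : Fin (d + 1) → ℝ) := by
  apply Real.sqrt_le_sqrt
  simp only [Fin.sum_univ_castSucc, Fin.snoc_castSucc, Fin.snoc_last]
  exact le_add_of_nonneg_right (sq_nonneg c)

theorem wnormSeq_le_iff (ha : 0 < a) {c : ℝ} :
    wnormSeq a x K ≤ c ↔ ∀ k ≤ K, eunorm (x k) ≤ c * a ^ k := by
  simp only [wnormSeq, Finset.sup'_le_iff, Finset.mem_range, Nat.lt_succ_iff,
    div_le_iff₀ (pow_pos ha _)]

theorem wnormSeq_nonneg : 0 ≤ wnormSeq a x K :=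
  calc 0 ≤ eunorm (x 0) / a ^ 0 := by rw [pow_zero, div_one]; exact Real.sqrt_nonneg _
    _ ≤ wnormSeq a x K :=
      Finset.le_sup' (fun k => eunorm (x k) / a ^ k) (Finset.mem_range.mpr K.succ_pos)

theorem norm_toLp_succ_sub_le_two_mul_wnormSeq (ha : a ∈ Set.Ioo (0 : ℝ) 1)
    (p : ℕ → Fin d → ℝ) (pref : Fin d → ℝ) (c : ℕ → ℝ) {k : ℕ} (hk : k < K) :
    ‖WithLp.toLp 2 (p (k + 1) - p k)‖ ≤
      2 * wnormSeq a (fun k => (Fin.snoc (p k - pref) (c k) : Fin (d + 1) → ℝ)) K * a ^ k := by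
  set Z := wnormSeq a (fun k => (Fin.snoc (p k - pref) (c k) : Fin (d + 1) → ℝ)) K with hZ
  have deviation (l : ℕ) (hl : l ≤ K) : ‖WithLp.toLp 2 (p l - pref)‖ ≤ Z * a ^ l := by
    rw [← eunorm_eq_norm_toLp]
    exact (eunorm_le_eunorm_snoc _ (c l)).trans ((wnormSeq_le_iff ha.1).mp hZ.ge l hl)
  calc ‖WithLp.toLp 2 (p (k + 1) - p k)‖
      = ‖WithLp.toLp 2 (p (k + 1) - pref) - WithLp.toLp 2 (p k - pref)‖ := by
        rw [← WithLp.toLp_sub, sub_sub_sub_cancel_right]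
    _ ≤ Z * a ^ (k + 1) + Z * a ^ k :=
        (norm_sub_le _ _).trans (add_le_add (deviation (k + 1) hk) (deviation k hk.le))
    _ ≤ Z * a ^ k + Z * a ^ k := by
        gcongr Z * ?_ + _
        · exact wnormSeq_nonneg
        · exact pow_le_pow_of_le_one ha.1.le ha.2.le k.le_succ
    _ = 2 * Z * a ^ k := by ring

end WeightedNorm

section Balance

variable {ι : Type*} [Fintype ι]

theorem norm_toLp_balance_le (x : ι → ℝ) : ‖WithLp.toLp 2 (balance x)‖ ≤ ‖WithLp.toLp 2 x‖ := by
  simp only [EuclideanSpace.norm_eq, Real.norm_eq_abs, sq_abs]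
  apply Real.sqrt_le_sqrt
  have expand (i : ι) : balance x i ^ 2 =
      x i ^ 2 - 2 * (𝔼 j, x j) * balance x i - (𝔼 j, x j) ^ 2 := by
    rw [Fintype.balance_apply]; ring
  simp only [expand, Finset.sum_sub_distrib, ← Finset.mul_sum, Fintype.sum_balance, mul_zero,
    sub_zero]
  exact sub_le_self _ (Finset.sum_nonneg fun _ _ => sq_nonneg _)

theorem balance_smul (c : ℝ) (x : ι → ℝ) : balance (c • x) = c • balance x := by
  ext i
  simp only [Fintype.balance_apply, Pi.smul_apply, smul_eq_mul, ← Finset.mul_expect, mul_sub]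

theorem balance_mulVec [DecidableEq ι] {W : Matrix ι ι ℝ} (hW : W ∈ doublyStochastic ℝ ι)
    (x : ι → ℝ) : balance (W *ᵥ x) = W *ᵥ balance x := by
  have expect_mulVec : 𝔼 i, (W *ᵥ x) i = 𝔼 i, x i := by
    rw [Fintype.expect_eq_sum_div_card, Fintype.expect_eq_sum_div_card,
      sum_mulVec_of_mem_doublyStochastic hW]
  have mulVec_const (c : ℝ) : W *ᵥ Function.const ι c = Function.const ι c := by
    ext i
    simp [mulVec, dotProduct, ← Finset.sum_mul, sum_row_of_mem_doublyStochastic hW]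
  rw [balance, balance, mulVec_sub, mulVec_const, expect_mulVec]

theorem norm_toLp_balance_mulVec_add_smul_sub [DecidableEq ι] {W : Matrix ι ι ℝ}
    (hW : W ∈ doublyStochastic ℝ ι) (x u : ι → ℝ) (c : ℝ) :
    ‖WithLp.toLp 2 (balance (W *ᵥ x + c • u)) - W.toEuclideanLin (WithLp.toLp 2 (balance x))‖ =
      |c| * ‖WithLp.toLp 2 (balance u)‖ := by
  rw [Fintype.balance_add, balance_smul, balance_mulVec hW, toLpLin_toLp, toLin'_apply,
    WithLp.toLp_add, add_sub_cancel_left, WithLp.toLp_smul, norm_smul, Real.norm_eq_abs]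

theorem sub_div_mul_one_div_mul_sum_eq_balance {n : ℕ} {c : ℝ} (hc : c ≠ 0) (x : Fin n → ℝ) :
    (fun i => x i - (c / n) * ((1 / c) * ∑ j, x j)) = balance x := by
  ext i
  rw [Fintype.balance_apply, Fintype.expect_eq_sum_div_card, Fintype.card_fin]
  field_simp

end Balance

section DoublyStochastic

variable {ι : Type*} [Fintype ι] [DecidableEq ι] {W : Matrix ι ι ℝ} {η D : ℝ}

/- Row by row this is the variance identity for the weights `W i ·`; the columns summing to one
turns `∑ i, ∑ j, W i j * x j ^ 2` into `∑ j, x j ^ 2`. -/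
theorem sum_sq_sub_sum_sq_mulVec (hW : W ∈ doublyStochastic ℝ ι) (x : ι → ℝ) :
    ∑ i, x i ^ 2 - ∑ i, (W *ᵥ x) i ^ 2 = ∑ i, ∑ j, W i j * (x j - (W *ᵥ x) i) ^ 2 := by
  have row (i : ι) : ∑ j, W i j * (x j - (W *ᵥ x) i) ^ 2 =
      ∑ j, W i j * x j ^ 2 - (W *ᵥ x) i ^ 2 := by
    have mean : ∑ j, W i j * x j = (W *ᵥ x) i := rfl
    have expand (j : ι) : W i j * (x j - (W *ᵥ x) i) ^ 2 =
        W i j * x j ^ 2 - 2 * (W *ᵥ x) i * (W i j * x j) + (W *ᵥ x) i ^ 2 * W i j := by ring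
    simp only [expand, Finset.sum_add_distrib, Finset.sum_sub_distrib, ← Finset.mul_sum,
      sum_row_of_mem_doublyStochastic hW, mean]
    ring
  simp only [row, Finset.sum_sub_distrib]
  rw [Finset.sum_comm]
  simp only [← Finset.sum_mul, sum_col_of_mem_doublyStochastic hW, one_mul]

theorem sum_sq_mulVec_le (hW : W ∈ doublyStochastic ℝ ι) (x : ι → ℝ) :
    ∑ i, (W *ᵥ x) i ^ 2 ≤ ∑ i, x i ^ 2 := by
  rw [← sub_nonneg, sum_sq_sub_sum_sq_mulVec hW]
  exact Finset.sum_nonneg fun i _ => Finset.sum_nonneg fun j _ =>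
    mul_nonneg (nonneg_of_mem_doublyStochastic hW) (sq_nonneg _)

theorem mul_sq_sub_mulVec_le (hW : W ∈ doublyStochastic ℝ ι) (x : ι → ℝ) (i j : ι) :
    W i j * (x j - (W *ᵥ x) i) ^ 2 ≤ ∑ i, x i ^ 2 - ∑ i, (W *ᵥ x) i ^ 2 := by
  have term_nonneg (i j : ι) : 0 ≤ W i j * (x j - (W *ᵥ x) i) ^ 2 :=
    mul_nonneg (nonneg_of_mem_doublyStochastic hW) (sq_nonneg _)
  calc W i j * (x j - (W *ᵥ x) i) ^ 2
      ≤ ∑ j, W i j * (x j - (W *ᵥ x) i) ^ 2 :=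
        Finset.single_le_sum (fun j _ => term_nonneg i j) (Finset.mem_univ j)
    _ ≤ ∑ i, ∑ j, W i j * (x j - (W *ᵥ x) i) ^ 2 :=
        Finset.single_le_sum (f := fun i => ∑ j, W i j * (x j - (W *ᵥ x) i) ^ 2)
          (fun i _ => Finset.sum_nonneg fun j _ => term_nonneg i j) (Finset.mem_univ i)
    _ = ∑ i, x i ^ 2 - ∑ i, (W *ᵥ x) i ^ 2 := (sum_sq_sub_sum_sq_mulVec hW x).symm

theorem dist_mulVec_le_sqrt (hW : W ∈ doublyStochastic ℝ ι) (hη : 0 < η) {x : ι → ℝ}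
    (hD : ∑ i, x i ^ 2 - ∑ i, (W *ᵥ x) i ^ 2 ≤ D) {i j : ι} (hij : η ≤ W i j) :
    dist (x j) ((W *ᵥ x) i) ≤ √(D / η) := by
  rw [Real.dist_eq]
  apply Real.abs_le_sqrt
  rw [le_div_iff₀' hη]
  calc η * (x j - (W *ᵥ x) i) ^ 2 ≤ W i j * (x j - (W *ᵥ x) i) ^ 2 := by gcongr
    _ ≤ D := (mul_sq_sub_mulVec_le hW x i j).trans hD

theorem lipschitzWith_toEuclideanLin (hW : W ∈ doublyStochastic ℝ ι) :
    LipschitzWith 1 W.toEuclideanLin := by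
  apply AddMonoidHomClass.lipschitz_of_bound_nnnorm W.toEuclideanLin 1
  intro v
  rw [one_mul, ← NNReal.coe_le_coe, coe_nnnorm, coe_nnnorm]
  simp only [EuclideanSpace.norm_eq, Real.norm_eq_abs, sq_abs, ofLp_toLpLin, toLin'_apply]
  exact Real.sqrt_le_sqrt (sum_sq_mulVec_le hW v.ofLp)

end DoublyStochastic

section ConnectedGraph

variable {V α : Type*} [PseudoMetricSpace α] {G : SimpleGraph V} {x : V → α} {c : ℝ}

theorem dist_le_walk_length_mul (h : ∀ i j, G.Adj i j → dist (x i) (x j) ≤ c) {i j : V}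
    (w : G.Walk i j) : dist (x i) (x j) ≤ w.length * c := by
  induction w with
  | nil => simp
  | @cons u v w huv q ih =>
    calc dist (x u) (x w) ≤ dist (x u) (x v) + dist (x v) (x w) := dist_triangle _ _ _
      _ ≤ c + q.length * c := add_le_add (h u v huv) ih
      _ = (q.cons huv).length * c := by rw [SimpleGraph.Walk.length_cons]; push_cast; ring

theorem dist_le_card_mul_of_preconnected [Fintype V] (hG : G.Preconnected) (hc : 0 ≤ c)
    (h : ∀ i j, G.Adj i j → dist (x i) (x j) ≤ c) (i j : V) :
    dist (x i) (x j) ≤ Fintype.card V * c := by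
  obtain ⟨w, hw⟩ := hG.exists_isPath i j
  calc dist (x i) (x j) ≤ w.length * c := dist_le_walk_length_mul h w
    _ ≤ Fintype.card V * c := by gcongr; exact hw.length_lt.le

end ConnectedGraph

theorem sum_sq_le_card_mul_sq_of_sum_eq_zero {ι : Type*} [Fintype ι] {x : ι → ℝ} {R : ℝ}
    (hx : ∑ i, x i = 0) (hR : ∀ i j, dist (x i) (x j) ≤ R) :
    ∑ i, x i ^ 2 ≤ Fintype.card ι * R ^ 2 := by
  have abs_le_R (i : ι) : |x i| ≤ R := by
    have hcard : (0 : ℝ) < Fintype.card ι := by exact_mod_cast Fintype.card_pos_iff.mpr ⟨i⟩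
    refine le_of_mul_le_mul_left ?_ hcard
    calc Fintype.card ι * |x i| = |∑ j, (x i - x j)| := by
          simp [Finset.sum_sub_distrib, hx, abs_mul]
      _ ≤ ∑ j, |x i - x j| := Finset.abs_sum_le_sum_abs _ _
      _ ≤ Fintype.card ι * R := by
          simpa only [Finset.card_univ, nsmul_eq_mul] using
            Finset.sum_le_card_nsmul Finset.univ (fun j => |x i - x j|) R fun j _ => hR i j
  simpa using Finset.sum_le_card_nsmul Finset.univ _ (R ^ 2) fun i _ =>
    sq_le_sq' (abs_le.mp (abs_le_R i)).1 (le_of_abs_le (abs_le_R i))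

section Window

variable {ι : Type*}

/-- The graph on the agents linking `i` and `j` when one of `W 0, …, W (L - 1)` gives the pair, in
either orientation, weight at least `η`. -/
def windowGraph (W : ℕ → Matrix ι ι ℝ) (η : ℝ) (L : ℕ) : SimpleGraph ι :=
  SimpleGraph.fromRel fun i j => ∃ l < L, η ≤ W l i j

/-- Joint connectivity of a sequence of weight matrices: any `L` consecutive matrices, whatever the
position of the first one, have a connected window graph. -/
def JointlyConnected (W : ℕ → Matrix ι ι ℝ) (η : ℝ) (L : ℕ) : Prop :=
  ∀ t, (windowGraph (fun k => W (t + k)) η L).Connected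

/- A window of length `2 * B` contains a full aligned window `{k * B, …, (k + 1) * B - 1}`. -/
theorem jointlyConnected_of_aligned_windows {W : ℕ → Matrix ι ι ℝ} {η : ℝ} {B : ℕ} (hB : 0 < B)
    {E : ℕ → ι → ι → Prop} (hWE : ∀ k i j, E k i j → η ≤ W k i j)
    (hE : ∀ k, (SimpleGraph.fromRel fun i j =>
      ∃ l, k * B ≤ l ∧ l < (k + 1) * B ∧ E l i j).Connected) :
    JointlyConnected W η (2 * B) := by
  intro t
  have lower : t ≤ (t / B + 1) * B := by
    simpa [mul_comm] using (Nat.lt_mul_div_succ t hB).le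
  have upper : (t / B + 1 + 1) * B ≤ t + 2 * B := by
    linarith [Nat.div_mul_le_self t B]
  have link {i j : ι} : (∃ l, (t / B + 1) * B ≤ l ∧ l < (t / B + 1 + 1) * B ∧ E l i j) →
      ∃ l < 2 * B, η ≤ W (t + l) i j := by
    rintro ⟨l, hl, hl', hE⟩
    refine ⟨l - t, by omega, hWE _ i j ?_⟩
    rwa [Nat.add_sub_cancel' (lower.trans hl)]
  exact (hE (t / B + 1)).mono fun i j (hij : _ ∧ _) => ⟨hij.1, hij.2.imp link link⟩

theorem dist_le_two_mul_of_windowGraph_adj {α : Type*} [PseudoMetricSpace α]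
    {W : ℕ → Matrix ι ι ℝ} {η : ℝ} {L : ℕ} {x : ℕ → ι → α} {r : ℝ} (hdiag : ∀ k i, η ≤ W k i i)
    (hr : ∀ k < L, ∀ i j, η ≤ W k i j → dist (x k j) (x (k + 1) i) ≤ r) {i j : ι}
    (hij : (windowGraph W η L).Adj i j) : dist (x 0 i) (x 0 j) ≤ 2 * L * r := by
  wlog hW : ∃ l < L, η ≤ W l i j generalizing i j
  · rw [dist_comm]
    exact this hij.symm (hij.2.resolve_left hW)
  obtain ⟨l, hl, hlij⟩ := hW
  have hr0 : 0 ≤ r := dist_nonneg.trans (hr l hl i j hlij)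
  have drift (i : ι) (k : ℕ) (hk : k ≤ L) : dist (x 0 i) (x k i) ≤ k * r := by
    simpa using dist_le_range_sum_of_dist_le (f := fun k => x k i) k (d := fun _ => r)
      fun hm => hr _ (hm.trans_le hk) i i (hdiag _ i)
  calc dist (x 0 i) (x 0 j)
      ≤ dist (x 0 i) (x (l + 1) i) + dist (x (l + 1) i) (x l j) + dist (x l j) (x 0 j) :=
        dist_triangle4 _ _ _ _
    _ ≤ (l + 1 : ℕ) * r + r + l * r := by
        gcongr
        · exact drift i (l + 1) hl
        · rw [dist_comm]; exact hr l hl i j hlij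
        · rw [dist_comm]; exact drift j l hl.le
    _ = 2 * (l + 1 : ℕ) * r := by push_cast; ring
    _ ≤ 2 * L * r := by gcongr; exact hl

end Window

section Contraction

variable {ι : Type*} [Fintype ι] [DecidableEq ι] {W : ℕ → Matrix ι ι ℝ} {x : ℕ → ι → ℝ} {η : ℝ}
  {L : ℕ}

theorem antitone_sum_sq (hW : ∀ k, W k ∈ doublyStochastic ℝ ι)
    (hx : ∀ k, x (k + 1) = W k *ᵥ x k) : Antitone fun k => ∑ i, x k i ^ 2 :=
  antitone_nat_of_succ_le fun k => by simpa only [hx k] using sum_sq_mulVec_le (hW k) (x k)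

theorem mul_sum_sq_le_of_windowGraph_connected (hη : 0 < η) (hW : ∀ k, W k ∈ doublyStochastic ℝ ι)
    (hdiag : ∀ k i, η ≤ W k i i) (hconn : (windowGraph W η L).Connected)
    (hx : ∀ k, x (k + 1) = W k *ᵥ x k) (hx0 : ∑ i, x 0 i = 0) :
    η * ∑ i, x 0 i ^ 2 ≤
      Fintype.card ι * (Fintype.card ι * (2 * L)) ^ 2 * (∑ i, x 0 i ^ 2 - ∑ i, x L i ^ 2) := by
  have hanti := antitone_sum_sq hW hx
  set D := ∑ i, x 0 i ^ 2 - ∑ i, x L i ^ 2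
  have hD0 : 0 ≤ D := sub_nonneg.mpr (hanti L.zero_le)
  have hstep (k : ℕ) (hk : k < L) (i j : ι) (hij : η ≤ W k i j) :
      dist (x k j) (x (k + 1) i) ≤ √(D / η) := by
    rw [hx k]
    refine dist_mulVec_le_sqrt (hW k) hη ?_ hij
    rw [← hx k]
    exact sub_le_sub (hanti k.zero_le) (hanti hk)
  have hdiam := dist_le_card_mul_of_preconnected hconn.preconnected (by positivity)
    fun i j => dist_le_two_mul_of_windowGraph_adj hdiag hstep
  calc η * ∑ i, x 0 i ^ 2
      ≤ η * (Fintype.card ι * (Fintype.card ι * (2 * L * √(D / η))) ^ 2) := by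
        gcongr
        exact sum_sq_le_card_mul_sq_of_sum_eq_zero hx0 hdiam
    _ = Fintype.card ι * (Fintype.card ι * (2 * L)) ^ 2 * (η * √(D / η) ^ 2) := by ring
    _ = Fintype.card ι * (Fintype.card ι * (2 * L)) ^ 2 * D := by
        rw [Real.sq_sqrt (by positivity), mul_div_cancel₀ D hη.ne']

end Contraction

section Perturbation

variable {α : Type*}

/-- The trajectory of the time-varying system `x[k+1] = A[k] (x[k])` started at `x₀`. -/
def trajectory (A : ℕ → α → α) (x₀ : α) : ℕ → α
  | 0 => x₀
  | k + 1 => A k (trajectory A x₀ k)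

theorem dist_trajectory_le [PseudoMetricSpace α] {A : ℕ → α → α}
    (hA : ∀ k, LipschitzWith 1 (A k)) (x : ℕ → α) (k : ℕ) :
    dist (x k) (trajectory A (x 0) k) ≤ ∑ i ∈ Finset.range k, dist (x (i + 1)) (A i (x i)) := by
  induction k with
  | zero => simp [trajectory]
  | succ k ih =>
    rw [Finset.sum_range_succ, add_comm (∑ i ∈ Finset.range k, _)]
    calc dist (x (k + 1)) (A k (trajectory A (x 0) k))
        ≤ dist (x (k + 1)) (A k (x k)) + dist (A k (x k)) (A k (trajectory A (x 0) k)) :=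
          dist_triangle _ _ _
      _ ≤ dist (x (k + 1)) (A k (x k)) + ∑ i ∈ Finset.range k, dist (x (i + 1)) (A i (x i)) := by
          gcongr
          exact ((hA k).dist_le_mul _ _).trans (by simpa using ih)

end Perturbation

section Gain

theorem exists_mem_Ioo_lt_pow {q : ℝ} (hq : q < 1) (L : ℕ) :
    ∃ a ∈ Set.Ioo (0 : ℝ) 1, q < a ^ L := by
  have hpow : ∀ᶠ a in nhdsWithin (1 : ℝ) (Set.Iio 1), q < a ^ L :=
    (((continuous_pow L).tendsto' 1 1 (one_pow L)).eventually_const_lt hq).filter_mono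
      nhdsWithin_le_nhds
  exact (Filter.Eventually.and (Ioo_mem_nhdsLT one_pos) hpow).exists

/- The constant `c` bracketed in the conclusion dominates the first `L` terms, and it solves
`q * c + L * v ≤ a ^ L * c`, so a bound `c * a ^ k` propagates from `k` to `k + L`. -/
theorem le_mul_pow_of_le_mul_add_sum {L : ℕ} (hL : 0 < L) {q a : ℝ} (ha : a ∈ Set.Ioo (0 : ℝ) 1)
    (hq : 0 ≤ q) (hqa : q < a ^ L) {X U : ℕ → ℝ} (hX : ∀ k, 0 ≤ X k)
    (hrec : ∀ t, X (t + L) ≤ q * X t + ∑ i ∈ Finset.range L, U (t + i)) {K : ℕ} {v : ℝ}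
    (hv : 0 ≤ v) (hU : ∀ k < K, U k ≤ v * a ^ k) :
    ∀ k ≤ K, X k ≤ (∑ j ∈ Finset.range L, X j / a ^ j + L / (a ^ L - q) * v) * a ^ k := by
  obtain ⟨ha0, ha1⟩ := ha
  have hgap : 0 < a ^ L - q := sub_pos.mpr hqa
  have hquot (j : ℕ) : 0 ≤ X j / a ^ j := div_nonneg (hX j) (by positivity)
  set b := ∑ j ∈ Finset.range L, X j / a ^ j
  have hb0 : 0 ≤ b := Finset.sum_nonneg fun j _ => hquot j
  set c := b + L / (a ^ L - q) * v
  have hcL : q * c + L * v ≤ a ^ L * c := by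
    have hLv : (a ^ L - q) * (L / (a ^ L - q) * v) = L * v := by field_simp
    linarith [mul_nonneg hgap.le hb0, mul_add (a ^ L - q) b (L / (a ^ L - q) * v)]
  intro k
  induction k using Nat.strong_induction_on with
  | _ k ih =>
    intro hk
    rcases lt_or_ge k L with hkL | hLk
    · rw [← div_le_iff₀ (by positivity)]
      calc X k / a ^ k ≤ b := Finset.single_le_sum (fun j _ => hquot j) (Finset.mem_range.mpr hkL)
        _ ≤ c := le_add_of_nonneg_right (by positivity)
    · obtain ⟨t, rfl⟩ := Nat.exists_eq_add_of_le' hLk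
      have hUsum : ∑ i ∈ Finset.range L, U (t + i) ≤ L * (v * a ^ t) := by
        simpa using Finset.sum_le_card_nsmul (Finset.range L) _ (v * a ^ t) fun i hi =>
          (hU (t + i) (by have := Finset.mem_range.mp hi; omega)).trans
            (mul_le_mul_of_nonneg_left (pow_le_pow_of_le_one ha0.le ha1.le (by omega)) hv)
      calc X (t + L) ≤ q * (c * a ^ t) + L * (v * a ^ t) :=
            (hrec t).trans (add_le_add (by gcongr; exact ih t (by omega) (by omega)) hUsum)
        _ = (q * c + L * v) * a ^ t := by ring
        _ ≤ a ^ L * c * a ^ t := by gcongr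
        _ = c * a ^ (t + L) := by ring

end Gain

section Averaging

variable {ι : Type*} [Fintype ι] [DecidableEq ι] {W : ℕ → Matrix ι ι ℝ} {η : ℝ} {L : ℕ}

theorem exists_norm_trajectory_le_of_jointlyConnected (hη : 0 < η) (hL : 0 < L)
    (hW : ∀ k, W k ∈ doublyStochastic ℝ ι) (hdiag : ∀ k i, η ≤ W k i i)
    (hconn : JointlyConnected W η L) :
    ∃ q ∈ Set.Ico (0 : ℝ) 1, ∀ t (v : EuclideanSpace ℝ ι), ∑ i, v i = 0 →
      ‖trajectory (fun k => (W (t + k)).toEuclideanLin) v L‖ ≤ q * ‖v‖ := by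
  have : Nonempty ι := (hconn 0).nonempty
  set M : ℝ := Fintype.card ι * (Fintype.card ι * (2 * L)) ^ 2
  have hM0 : 0 < M := by positivity
  have hq1 : √(1 - η / M) < 1 := by
    rw [Real.sqrt_lt' one_pos, one_pow]
    exact sub_lt_self 1 (by positivity)
  refine ⟨√(1 - η / M), ⟨Real.sqrt_nonneg _, hq1⟩, fun t v hv => ?_⟩
  set x := trajectory (fun k => (W (t + k)).toEuclideanLin) v
  have hdrop : η * ∑ i, v i ^ 2 ≤ M * (∑ i, v i ^ 2 - ∑ i, x L i ^ 2) :=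
    mul_sum_sq_le_of_windowGraph_connected (x := fun k => (x k).ofLp) hη (fun k => hW (t + k))
      (fun k => hdiag (t + k)) (hconn t) (fun k => rfl) hv
  have hratio : ∑ i, x L i ^ 2 ≤ (1 - η / M) * ∑ i, v i ^ 2 := by
    have : η / M * ∑ i, v i ^ 2 ≤ ∑ i, v i ^ 2 - ∑ i, x L i ^ 2 := by
      rwa [div_mul_eq_mul_div, div_le_iff₀' hM0]
    linarith
  simp only [EuclideanSpace.norm_eq, Real.norm_eq_abs, sq_abs]
  rw [← Real.sqrt_mul' _ (Finset.sum_nonneg fun i _ => sq_nonneg _)]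
  exact Real.sqrt_le_sqrt hratio

theorem exists_gain_of_jointlyConnected (hη : 0 < η) (hL : 0 < L)
    (hW : ∀ k, W k ∈ doublyStochastic ℝ ι) (hdiag : ∀ k i, η ≤ W k i i)
    (hconn : JointlyConnected W η L) :
    ∃ a ∈ Set.Ioo (0 : ℝ) 1, ∃ C > (0 : ℝ), ∀ x : ℕ → EuclideanSpace ℝ ι,
      (∀ k, ∑ i, x k i = 0) → ∃ b ≥ (0 : ℝ), ∀ (K : ℕ) (v : ℝ), 0 ≤ v →
        (∀ k < K, ‖x (k + 1) - (W k).toEuclideanLin (x k)‖ ≤ v * a ^ k) →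
          ∀ k ≤ K, ‖x k‖ ≤ (b + C * v) * a ^ k := by
  obtain ⟨q, ⟨hq0, hq1⟩, hcontr⟩ :=
    exists_norm_trajectory_le_of_jointlyConnected hη hL hW hdiag hconn
  obtain ⟨a, ha, hqa⟩ := exists_mem_Ioo_lt_pow hq1 L
  have ha0 : 0 < a := ha.1
  refine ⟨a, ha, L / (a ^ L - q), div_pos (by exact_mod_cast hL) (sub_pos.mpr hqa),
    fun x hx => ⟨∑ j ∈ Finset.range L, ‖x j‖ / a ^ j, by positivity, fun K v hv hu => ?_⟩⟩
  refine le_mul_pow_of_le_mul_add_sum hL ha hq0 hqa (fun k => norm_nonneg (x k)) (fun t => ?_) hv hu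
  set free := trajectory (fun k => (W (t + k)).toEuclideanLin) (x t) L
  calc ‖x (t + L)‖ ≤ ‖free‖ + dist (x (t + L)) free := norm_le_norm_add_norm_sub' _ _
    _ ≤ q * ‖x t‖ + ∑ i ∈ Finset.range L,
          ‖x (t + (i + 1)) - (W (t + i)).toEuclideanLin (x (t + i))‖ :=
        add_le_add (hcontr t (x t) (hx t)) <| by
          simpa only [dist_eq_norm, add_zero, add_assoc, free] using
            dist_trajectory_le (fun k => lipschitzWith_toEuclideanLin (hW (t + k)))
              (fun k => x (t + k)) L

end Averaging

theorem stmt6_general {n : ℕ} {nhat : ℝ} (hnhat : 0 < nhat) {W : ℕ → Matrix (Fin n) (Fin n) ℝ}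
    {η : ℝ} {L : ℕ} (hη : 0 < η) (hL : 0 < L) (hW : ∀ k, W k ∈ doublyStochastic ℝ (Fin n))
    (hdiag : ∀ k i, η ≤ W k i i) (hconn : JointlyConnected W η L) :
    ∃ a ∈ Set.Ioo (0 : ℝ) 1, ∃ α2 > (0 : ℝ), ∀ s > (0 : ℝ), ∀ p lam y : ℕ → Fin n → ℝ,
      (∀ k, lam (k + 1) = W k *ᵥ lam k - s • y k) →
      (∀ k, y (k + 1) = W k *ᵥ y k + nhat • (p (k + 1) - p k)) →
      ∃ β2 ≥ (0 : ℝ), ∀ (pref : Fin n → ℝ) (lamref : ℝ) (K : ℕ),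
        wnormSeq a (fun k i => lam k i - (nhat / (n : ℝ)) * ((1 / nhat) * ∑ j, lam k j)) K ≤
          s * α2 * wnormSeq a (fun k => Fin.snoc (fun i => p k i - pref i)
            ((1 / nhat) * (∑ j, lam k j) - lamref)) K + β2 := by
  obtain ⟨a, ha, C, hC, hgain⟩ := exists_gain_of_jointlyConnected hη hL hW hdiag hconn
  refine ⟨a, ha, 2 * C ^ 2 * nhat, by positivity, fun s hs p lam y hlam hy => ?_⟩
  obtain ⟨βy, hβy, hybound⟩ := hgain (fun k => WithLp.toLp 2 (balance (y k)))
    fun k => Fintype.sum_balance (y k)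
  obtain ⟨βl, hβl, hlbound⟩ := hgain (fun k => WithLp.toLp 2 (balance (lam k)))
    fun k => Fintype.sum_balance (lam k)
  refine ⟨βl + C * (s * βy), by positivity, fun pref lamref K => ?_⟩
  set Z := wnormSeq a (fun k => Fin.snoc (fun i => p k i - pref i)
    ((1 / nhat) * (∑ j, lam k j) - lamref)) K
  have hZ : 0 ≤ Z := wnormSeq_nonneg
  have hyinput (k : ℕ) (hk : k < K) : ‖WithLp.toLp 2 (balance (y (k + 1))) -
      (W k).toEuclideanLin (WithLp.toLp 2 (balance (y k)))‖ ≤ 2 * nhat * Z * a ^ k := by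
    rw [hy, norm_toLp_balance_mulVec_add_smul_sub (hW k), abs_of_pos hnhat]
    calc nhat * ‖WithLp.toLp 2 (balance (p (k + 1) - p k))‖ ≤ nhat * (2 * Z * a ^ k) := by
          gcongr
          exact (norm_toLp_balance_le _).trans
            (norm_toLp_succ_sub_le_two_mul_wnormSeq ha p pref _ hk)
      _ = 2 * nhat * Z * a ^ k := by ring
  have hlinput (k : ℕ) (hk : k < K) : ‖WithLp.toLp 2 (balance (lam (k + 1))) -
      (W k).toEuclideanLin (WithLp.toLp 2 (balance (lam k)))‖ ≤
        s * (βy + C * (2 * nhat * Z)) * a ^ k := by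
    rw [hlam, sub_eq_add_neg (W k *ᵥ lam k), ← neg_smul,
      norm_toLp_balance_mulVec_add_smul_sub (hW k), abs_neg, abs_of_pos hs, mul_assoc]
    gcongr
    exact hybound K _ (by positivity) hyinput k hk.le
  refine (wnormSeq_le_iff ha.1).mpr fun k hk => ?_
  rw [sub_div_mul_one_div_mul_sum_eq_balance hnhat.ne', eunorm_eq_norm_toLp]
  calc ‖WithLp.toLp 2 (balance (lam k))‖
      ≤ (βl + C * (s * (βy + C * (2 * nhat * Z)))) * a ^ k :=
        hlbound K _ (by positivity) hlinput k hk
    _ = (s * (2 * C ^ 2 * nhat) * Z + (βl + C * (s * βy))) * a ^ k := by ring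

/-- Proposition 2: the disturbance system over time-varying undirected graphs
is finite-gain stable. -/
theorem stmt6 {n : ℕ} (hn : 0 < n) (m : ℝ) (hm : 0 < m)
    (f : Fin n → ℝ → ℝ) (pl pu ℓ : Fin n → ℝ) (hbox : ∀ i, pl i ≤ pu i)
    (hf : ∀ i, ContDiff ℝ 2 (f i))
    (hsc : ∀ i, ∀ x ∈ Set.Icc (pl i) (pu i), m ≤ iteratedDeriv 2 (f i) x)
    (nhat : ℝ) (hnhat : 0 < nhat) (ξ : ℝ) (hξ : ξ ∈ Set.Ioc (0 : ℝ) ((n : ℝ) / nhat))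
    -- the time-varying undirected communication graph and the weight matrices
    (E : ℕ → Fin n → Fin n → Prop) (hEsymm : ∀ k i j, E k i j → E k j i)
    (W : ℕ → Matrix (Fin n) (Fin n) ℝ) (η : ℝ) (hη : 0 < η)
    (hWsymm : ∀ k, (W k).IsSymm)
    (hWnonneg : ∀ k i j, 0 ≤ W k i j)
    (hWrow : ∀ k i, ∑ j, W k i j = 1)
    (hWcol : ∀ k j, ∑ i, W k i j = 1)
    (hWedge : ∀ k i j, E k i j → η ≤ W k i j)
    (hWdiag : ∀ k i, η ≤ W k i i)
    (hWzero : ∀ k i j, i ≠ j → ¬ E k i j → W k i j = 0)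
    -- B-window connectivity
    (B : ℕ) (hB : 0 < B)
    (hconn : ∀ k : ℕ,
      (SimpleGraph.fromRel fun i j => ∃ l, k * B ≤ l ∧ l < (k + 1) * B ∧ E l i j).Connected)
    -- the equilibrium of the nominal system
    (pstar : Fin n → ℝ) (lamstar : ℝ)
    (heq : ∀ s : ℝ, 0 < s → ∀ i,
      pstar i = projI (pl i) (pu i)
        (pstar i - s * deriv (f i) (pstar i) + s * ξ * (nhat / (n : ℝ)) * lamstar))
    (hbal : ∑ i, (pstar i - ℓ i) = 0) :
    ∃ a ∈ Set.Ioo (0 : ℝ) 1, ∃ sbar > (0 : ℝ), ∃ α2 > (0 : ℝ),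
      ∀ s ∈ Set.Ioo (0 : ℝ) sbar,
        ∀ p lam y : ℕ → Fin n → ℝ,
          (∀ i, y 0 i = nhat * (p 0 i - ℓ i)) →
          (∀ (k : ℕ) (i : Fin n), p (k + 1) i = projI (pl i) (pu i)
              (p k i - s * deriv (f i) (p k i) + s * ξ * lam k i)) →
          (∀ k : ℕ, lam (k + 1) = W k *ᵥ lam k - s • y k) →
          (∀ k : ℕ, y (k + 1) = W k *ᵥ y k + nhat • (p (k + 1) - p k)) →
          ∃ β2 ≥ (0 : ℝ), ∀ K : ℕ,
            wnormSeq a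
                (fun k i => lam k i - (nhat / (n : ℝ)) * ((1 / nhat) * ∑ j, lam k j)) K ≤
              s * α2 *
                  wnormSeq a
                    (fun k => Fin.snoc (fun i => p k i - pstar i)
                      ((1 / nhat) * (∑ j, lam k j) - lamstar)) K +
                β2 := by
  have hW (k : ℕ) : W k ∈ doublyStochastic ℝ (Fin n) :=
    mem_doublyStochastic_iff_sum.mpr ⟨hWnonneg k, hWrow k, hWcol k⟩
  obtain ⟨a, ha, α2, hα2, hgain⟩ := stmt6_general hnhat hη (by positivity) hW hWdiag
    (jointlyConnected_of_aligned_windows hB hWedge hconn)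
  refine ⟨a, ha, 1, one_pos, α2, hα2, fun s hs p lam y _ _ hlam hy => ?_⟩
  obtain ⟨β2, hβ2, hbound⟩ := hgain s hs.1 p lam y hlam hy
  exact ⟨β2, hβ2, hbound pstar lamstar⟩
end

section
/- (Lemma on v, robust push-sum) Let n ≤ N be positive integers, γ ∈ (0,1), B a positive integer, and τ := min(γ, 1−γ)/n. Let {P̃[k]}_{k≥0} be N×N column-stochastic nonnegative matrices such that: (i) P̃_{ii}[k] ≥ 1/n for every i ∈ {1,…,n} and every k; (ii) for every k ≥ 0 and every t ≥ (N−1)(2B−1), all entries of the product P̃[k+t−1]···P̃[k] are at least τ^{(N−1)(2B−1)}; and (iii) for every virtual index l ∈ {n+1,…,N} there exists j ∈ {1,…,n} such that P̃_{lj}[k] ≥ (1−γ)/n for every k. Define v[k+1] := P̃[k]v[k] with v[0] = (𝟙_n; 0_{N−n}) (ones on the first n coordinates, zeros elsewhere). Then for every i ∈ {1,…,N} and every k ≥ 1: v_i[k] ≥ ((1−γ)/n)·τ^{N(2B−1)}. -/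
open Matrix

/-!
A diagonal entry of `P (t-1) ⋯ P 0` at a node with self-weights at least `τ` is at least `τ ^ t`,
because the walk may stay put. This settles times shorter than the window length; at later times
the window hypothesis takes over, so these diagonal entries have a lower bound uniform in time. A
node outside the set of actual nodes gets its mass from an actual node one step earlier, which
costs a single factor `c`. Since `v 0` is nonnegative and at least `1` on the actual nodes, every
bound on an entry in a column of an actual node is a bound on `v`.
-/

section Nonneg

variable {l m n R : Type*} [Fintype m] [Semiring R] [PartialOrder R] [IsOrderedRing R]
  {A : Matrix l m R}

theorem mul_le_mulVec_apply {x : m → R} (hA : ∀ i j, 0 ≤ A i j) (hx : 0 ≤ x) (i : l) (j : m) :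
    A i j * x j ≤ (A *ᵥ x) i :=
  Finset.single_le_sum (f := fun j ↦ A i j * x j)
    (fun j _ ↦ mul_nonneg (hA i j) (hx j)) (Finset.mem_univ j)

theorem mul_le_matrix_mul_apply {C : Matrix m n R} (hA : ∀ i j, 0 ≤ A i j)
    (hC : ∀ i j, 0 ≤ C i j) (i : l) (j : m) (k : n) : A i j * C j k ≤ (A * C) i k :=
  mul_le_mulVec_apply hA (fun j ↦ hC j k) i j

end Nonneg

section StateTransition

variable {ι R : Type*} [Fintype ι] [DecidableEq ι] [Semiring R]

/-- The state-transition matrix `P (t-1) ⋯ P 0` of the linear time-varying system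
`v (k + 1) = P k *ᵥ v k`, which maps `v 0` to `v t`; later factors stand on the left. -/
def stateTransition (P : ℕ → Matrix ι ι R) : ℕ → Matrix ι ι R
  | 0 => 1
  | t + 1 => P t * stateTransition P t

variable {P : ℕ → Matrix ι ι R}

theorem eq_stateTransition {Q : ℕ → Matrix ι ι R} (hQ_zero : Q 0 = 1)
    (hQ_succ : ∀ t, Q (t + 1) = P t * Q t) (t : ℕ) : Q t = stateTransition P t := by
  induction t with
  | zero => exact hQ_zero
  | succ t ih => rw [hQ_succ, ih, stateTransition]

theorem eq_stateTransition_mulVec {v : ℕ → ι → R} (hv : ∀ k, v (k + 1) = P k *ᵥ v k) (k : ℕ) :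
    v k = stateTransition P k *ᵥ v 0 := by
  induction k with
  | zero => rw [stateTransition, one_mulVec]
  | succ k ih => rw [hv, ih, mulVec_mulVec, stateTransition]

variable [PartialOrder R] [IsOrderedRing R]

theorem stateTransition_nonneg (hP : ∀ k i j, 0 ≤ P k i j) (t : ℕ) (i j : ι) :
    0 ≤ stateTransition P t i j := by
  induction t generalizing i with
  | zero => exact zero_le_one_elem i j
  | succ t ih => exact dotProduct_nonneg_of_nonneg (hP t i) ih

variable {τ : R} {i : ι}

theorem pow_le_stateTransition_diag (hP : ∀ k i j, 0 ≤ P k i j) (hτ : 0 ≤ τ)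
    (hdiag : ∀ k, τ ≤ P k i i) (t : ℕ) : τ ^ t ≤ stateTransition P t i i := by
  induction t with
  | zero => rw [stateTransition, one_apply_eq, pow_zero]
  | succ t ih =>
    calc τ ^ (t + 1) = τ * τ ^ t := pow_succ' τ t
      _ ≤ P t i i * stateTransition P t i i :=
        mul_le_mul (hdiag t) ih (pow_nonneg hτ t) (hP t i i)
      _ ≤ stateTransition P (t + 1) i i :=
        mul_le_matrix_mul_apply (hP t) (stateTransition_nonneg hP t) i i i

theorem pow_le_stateTransition_diag_of_window (hP : ∀ k i j, 0 ≤ P k i j) (hτ : 0 ≤ τ)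
    (hτ_le_one : τ ≤ 1) (hdiag : ∀ k, τ ≤ P k i i) {T m : ℕ} (hTm : T ≤ m)
    (hwindow : ∀ t, T ≤ t → τ ^ m ≤ stateTransition P t i i) (t : ℕ) :
    τ ^ m ≤ stateTransition P t i i := by
  rcases le_total T t with hTt | htT
  · exact hwindow t hTt
  · exact (pow_le_pow_of_le_one hτ hτ_le_one (htT.trans hTm)).trans
      (pow_le_stateTransition_diag hP hτ hdiag t)

theorem exists_mul_le_stateTransition {s : Set ι} {b c : R} (hP : ∀ k i j, 0 ≤ P k i j)
    (hb : 0 ≤ b) (hc : c ≤ 1) (hdiag : ∀ t, ∀ j ∈ s, b ≤ stateTransition P t j j)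
    (hin : ∀ k, ∀ l ∉ s, ∃ j ∈ s, c ≤ P k l j) (t : ℕ) (i : ι) :
    ∃ j ∈ s, c * b ≤ stateTransition P (t + 1) i j := by
  by_cases hi : i ∈ s
  · exact ⟨i, hi, (mul_le_of_le_one_left hb hc).trans (hdiag (t + 1) i hi)⟩
  · obtain ⟨j, hj, hcj⟩ := hin t i hi
    refine ⟨j, hj, ?_⟩
    calc c * b ≤ P t i j * stateTransition P t j j :=
          mul_le_mul hcj (hdiag t j hj) hb (hP t i j)
      _ ≤ stateTransition P (t + 1) i j :=
          mul_le_matrix_mul_apply (hP t) (stateTransition_nonneg hP t) i j j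

theorem stmt13_general {s : Set ι} {c : R} {T m : ℕ} {v : ℕ → ι → R}
    (hP : ∀ k i j, 0 ≤ P k i j) (hτ : 0 ≤ τ) (hτ_le_one : τ ≤ 1) (hc : c ≤ 1)
    (hdiag : ∀ k, ∀ i ∈ s, τ ≤ P k i i) (hTm : T ≤ m)
    (hwindow : ∀ t, T ≤ t → ∀ i ∈ s, τ ^ m ≤ stateTransition P t i i)
    (hin : ∀ k, ∀ l ∉ s, ∃ j ∈ s, c ≤ P k l j)
    (hv_nonneg : 0 ≤ v 0) (hv_one : ∀ i ∈ s, 1 ≤ v 0 i) (hv : ∀ k, v (k + 1) = P k *ᵥ v k)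
    (i : ι) (k : ℕ) (hk : 1 ≤ k) : c * τ ^ m ≤ v k i := by
  obtain ⟨t, rfl⟩ := Nat.exists_eq_add_of_le' hk
  have hdiag_pow : ∀ t, ∀ j ∈ s, τ ^ m ≤ stateTransition P t j j := fun t j hj ↦
    pow_le_stateTransition_diag_of_window hP hτ hτ_le_one (fun k ↦ hdiag k j hj) hTm
      (fun t ht ↦ hwindow t ht j hj) t
  obtain ⟨j, hj, hij⟩ :=
    exists_mul_le_stateTransition hP (pow_nonneg hτ m) hc hdiag_pow hin t i
  have hΦ := stateTransition_nonneg hP (t + 1)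
  calc c * τ ^ m ≤ stateTransition P (t + 1) i j := hij
    _ ≤ stateTransition P (t + 1) i j * v 0 j := le_mul_of_one_le_right (hΦ i j) (hv_one j hj)
    _ ≤ (stateTransition P (t + 1) *ᵥ v 0) i := mul_le_mulVec_apply hΦ hv_nonneg i j
    _ = v (t + 1) i := by rw [← eq_stateTransition_mulVec hv]

end StateTransition

theorem min_one_sub_div_mem_Icc {γ d : ℝ} (hγ : γ ∈ Set.Icc (0 : ℝ) 1) (hd : 0 ≤ d) :
    min γ (1 - γ) / d ∈ Set.Icc 0 (1 / d) :=
  ⟨div_nonneg (le_min hγ.1 (sub_nonneg.2 hγ.2)) hd,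
    div_le_div_of_nonneg_right ((min_le_left γ (1 - γ)).trans hγ.2) hd⟩

/-- Lemma on `v` for the robust push-sum over the augmented (virtual-node) network:
entrywise positive lower bound on the push-sum weights. -/
theorem stmt13 (n N : ℕ) (hn : 0 < n) (hnN : n ≤ N)
    (γ : ℝ) (hγ : γ ∈ Set.Ioo (0 : ℝ) 1)
    (B : ℕ) (hB : 0 < B)
    (τ : ℝ) (hτ : τ = min γ (1 - γ) / n)
    (P : ℕ → Matrix (Fin N) (Fin N) ℝ)
    (hPnonneg : ∀ k i j, 0 ≤ P k i j)
    (hPcol : ∀ k j, ∑ i, P k i j = 1)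
    -- (i) actual nodes have self-weight at least 1/n
    (hdiag : ∀ (k : ℕ) (i : Fin N), (i : ℕ) < n → 1 / (n : ℝ) ≤ P k i i)
    -- (ii) products over long windows have entries bounded below
    (prodP : ℕ → ℕ → Matrix (Fin N) (Fin N) ℝ)
    (hprod0 : ∀ k, prodP k 0 = 1)
    (hprodS : ∀ k t, prodP k (t + 1) = P (k + t) * prodP k t)
    (hwindow : ∀ k t, (N - 1) * (2 * B - 1) ≤ t →
        ∀ i j, τ ^ ((N - 1) * (2 * B - 1)) ≤ prodP k t i j)
    -- (iii) every virtual node receives from some actual node with weight ≥ (1-γ)/n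
    (hvirt : ∀ l : Fin N, n ≤ (l : ℕ) →
        ∃ j : Fin N, (j : ℕ) < n ∧ ∀ k, (1 - γ) / n ≤ P k l j)
    (v : ℕ → Fin N → ℝ)
    (hv0 : ∀ i : Fin N, v 0 i = if (i : ℕ) < n then 1 else 0)
    (hvrec : ∀ k, v (k + 1) = P k *ᵥ v k) :
    ∀ (i : Fin N) (k : ℕ), 1 ≤ k →
      ((1 - γ) / n) * τ ^ (N * (2 * B - 1)) ≤ v k i := by
  obtain ⟨hτ_nonneg, hτ_le⟩ : τ ∈ Set.Icc 0 (1 / (n : ℝ)) :=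
    hτ ▸ min_one_sub_div_mem_Icc (Set.Ioo_subset_Icc_self hγ) n.cast_nonneg
  have hn_inv : 1 / (n : ℝ) ≤ 1 := div_le_one_of_le₀ (Nat.one_le_cast.2 hn) n.cast_nonneg
  have hc : (1 - γ) / n ≤ 1 :=
    (div_le_div_of_nonneg_right (sub_le_self 1 hγ.1.le) n.cast_nonneg).trans hn_inv
  have hexp : (N - 1) * (2 * B - 1) ≤ N * (2 * B - 1) := Nat.mul_le_mul_right _ (N.sub_le 1)
  have hτ_pow := pow_le_pow_of_le_one hτ_nonneg (hτ_le.trans hn_inv) hexp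
  have hprod := eq_stateTransition (hprod0 0) (fun t ↦ by rw [hprodS, zero_add])
  exact stmt13_general (s := {i : Fin N | (i : ℕ) < n}) hPnonneg hτ_nonneg
    (hτ_le.trans hn_inv) hc (fun k i hi ↦ hτ_le.trans (hdiag k i hi)) hexp
    (fun t ht i _ ↦ hprod t ▸ hτ_pow.trans (hwindow 0 t ht i i))
    (fun k l hl ↦ (hvirt l (not_lt.1 hl)).imp fun j hj ↦ ⟨hj.1, hj.2 k⟩)
    (fun i ↦ by rw [hv0]; split_ifs <;> simp) (fun i hi ↦ ((hv0 i).trans (if_pos hi)).ge) hvrec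
end
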